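/- arXiv:1406.2299 — 2 statements merged into one kernel-verified Lean document; each statement's English description precedes it below -/
import Mathlib

section
/- Let n ≥ 2 be an integer. The number of tuples (k_1, …, k_{n−1}) of integers with each k_i ∈ {1, …, n−1} and such that for all indices 1 ≤ r ≤ s ≤ n−1 the consecutive sum k_r + k_{r+1} + ⋯ + k_s is not divisible by n, is exactly (n−1)!. -/
/-- Extension by zero of a tuple to all naturals. -/
def extZ {m : ℕ} (k : Fin m → ℤ) (j : ℕ) : ℤ := if h : j < m then k ⟨j, h⟩ else 0

/-- Partial sums. -/
def pSum {m : ℕ} (k : Fin m → ℤ) (j : ℕ) : ℤ := ∑ i ∈ Finset.range j, extZ k i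

lemma sum_Icc_eq_pSum {m : ℕ} (k : Fin m → ℤ) (r s : Fin m) (h : r ≤ s) :
    ∑ i ∈ Finset.Icc r s, k i = pSum k (s + 1) - pSum k r := by
  have h1 : ∑ i ∈ Finset.Icc r s, k i
      = ∑ j ∈ (Finset.Icc r s).map Fin.valEmbedding, extZ k j := by
    rw [Finset.sum_map]
    exact Finset.sum_congr rfl (fun i _ => by simp [extZ])
  have h' : (r : ℕ) ≤ s + 1 := by have : (r : ℕ) ≤ s := h; omega
  rw [h1, Fin.map_valEmbedding_Icc, pSum, pSum, ← Finset.sum_Ico_eq_sub _ h']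
  rfl

/-- Admissible tuples. -/
def Adm (m : ℕ) (k : Fin m → ℤ) : Prop :=
  (∀ i, 1 ≤ k i ∧ k i ≤ ((m + 1 : ℕ) : ℤ) - 1) ∧
      (∀ r s : Fin m, r ≤ s → ¬ (((m + 1 : ℕ) : ℤ) ∣ ∑ i ∈ Finset.Icc r s, k i))

lemma pSum_ne {m : ℕ} {k : Fin m → ℤ} (hk : Adm m k) {a b : ℕ} (hab : a < b) (hb : b ≤ m) :
    ((pSum k a : ℤ) : ZMod (m + 1)) ≠ (pSum k b : ℤ) := by
  intro h
  have h2 := (ZMod.intCast_eq_intCast_iff_dvd_sub _ _ _).1 h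
  obtain ⟨c, rfl⟩ : ∃ c, b = c + 1 := ⟨b - 1, by omega⟩
  have hac : (⟨a, by omega⟩ : Fin m) ≤ ⟨c, by omega⟩ := by
    rw [Fin.mk_le_mk]; omega
  apply hk.2 _ _ hac
  rw [sum_Icc_eq_pSum _ _ _ hac]
  exact h2

/-- The map to embeddings into nonzero residues. -/
def toEmb (m : ℕ) (k : {k : Fin m → ℤ // Adm m k}) : Fin m ↪ {x : ZMod (m + 1) // x ≠ 0} where
  toFun i := ⟨((pSum k.1 (i + 1) : ℤ) : ZMod (m + 1)), by
    have := pSum_ne k.2 (a := 0) (b := i + 1) (by omega) (by omega)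
    simpa [pSum] using this.symm⟩
  inj' := by
    intro i j h
    simp only [Subtype.mk.injEq] at h
    by_contra hne
    rcases lt_or_gt_of_ne hne with hl | hl
    · exact pSum_ne k.2 (a := i + 1) (b := j + 1) (by simpa using hl) (by omega) h
    · exact pSum_ne k.2 (a := j + 1) (b := i + 1) (by simpa using hl) (by omega) h.symm

lemma toEmb_injective (m : ℕ) : Function.Injective (toEmb m) := by
  intro k l h
  have hp : ∀ j ≤ m, ((pSum k.1 j : ℤ) : ZMod (m + 1)) = (pSum l.1 j : ℤ) := by
    intro j hj
    rcases j with _ | j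
    · simp [pSum]
    · have := congrArg (fun e => ((e ⟨j, by omega⟩ : {x : ZMod (m + 1) // x ≠ 0}) : ZMod (m + 1))) h
      exact this
  apply Subtype.ext
  funext i
  have h1 := hp (i + 1) (by omega)
  have h0 := hp i (by omega)
  simp only [pSum, Finset.sum_range_succ, Int.cast_add] at h1 h0
  rw [h0] at h1
  have h2 := add_left_cancel h1
  simp only [extZ, Fin.is_lt, dite_true, Fin.eta] at h2
  have h3 := (ZMod.intCast_eq_intCast_iff _ _ _).1 h2
  have hk := k.2.1 i
  have hl := l.2.1 i
  have h4 : k.1 i % ((m + 1 : ℕ) : ℤ) = l.1 i % ((m + 1 : ℕ) : ℤ) := h3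
  rwa [Int.emod_eq_of_lt (by omega) (by omega), Int.emod_eq_of_lt (by omega) (by omega)] at h4

lemma toEmb_surjective (m : ℕ) : Function.Surjective (toEmb m) := by
  intro e
  let E : ℕ → ZMod (m + 1) := fun j =>
    if h : 0 < j ∧ j ≤ m then (e ⟨j - 1, by omega⟩).1 else 0
  have E0 : E 0 = 0 := by simp [E]
  have Es : ∀ i : Fin m, E (i + 1) = (e i).1 := by
    intro i
    have : (i : ℕ) + 1 ≤ m := by omega
    simp [E, this]
  have Ene : ∀ a b, a < b → b ≤ m → E a ≠ E b := by
    intro a b hab hb h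
    obtain ⟨c, rfl⟩ : ∃ c, b = c + 1 := ⟨b - 1, by omega⟩
    have hc := Es ⟨c, by omega⟩
    simp only at hc
    rw [hc] at h
    rcases a with _ | a
    · rw [E0] at h
      exact (e ⟨c, by omega⟩).2 h.symm
    · have ha := Es ⟨a, by omega⟩
      simp only at ha
      rw [ha] at h
      have := e.injective (Subtype.ext h)
      simp only [Fin.mk.injEq] at this
      omega
  let k : Fin m → ℤ := fun i => ((E (i + 1) - E i).val : ℤ)
  have hp : ∀ j ≤ m, ((pSum k j : ℤ) : ZMod (m + 1)) = E j := by
    intro j hj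
    induction j with
    | zero => simp [pSum, E0]
    | succ j ih =>
      have h1 := ih (by omega)
      have hj' : j < m := by omega
      have h2 : pSum k (j + 1) = pSum k j + k ⟨j, hj'⟩ := by
        simp [pSum, Finset.sum_range_succ, extZ, hj']
      rw [h2, Int.cast_add, h1]
      simp [k]
  have hk : Adm m k := by
    constructor
    · intro i
      have hlt := ZMod.val_lt (E (i + 1) - E i)
      have hpos : (E (i + 1) - E i).val ≠ 0 := by
        rw [Ne, ZMod.val_eq_zero, sub_eq_zero]
        exact (Ene i (i + 1) (by omega) (by omega)).symm
      simp only [k]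
      omega
    · intro r s hrs hd
      have hrs' : (r : ℕ) ≤ s := hrs
      rw [sum_Icc_eq_pSum _ _ _ hrs] at hd
      have := (ZMod.intCast_eq_intCast_iff_dvd_sub _ _ _).2 hd
      rw [hp _ (by omega), hp _ (by omega)] at this
      exact Ene r (s + 1) (by omega) (by omega) this
  refine ⟨⟨k, hk⟩, ?_⟩
  ext i
  have := hp (i + 1) (by omega)
  rw [Es] at this
  exact this

lemma card_adm (m : ℕ) : Nat.card {k : Fin m → ℤ // Adm m k} = Nat.factorial m := by
  rw [Nat.card_eq_of_bijective _ ⟨toEmb_injective m, toEmb_surjective m⟩,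
    Nat.card_eq_fintype_card, Fintype.card_embedding_eq, Fintype.card_fin]
  have : Fintype.card {x : ZMod (m + 1) // x ≠ 0} = m := by
    rw [Fintype.card_subtype_compl]
    simp [ZMod.card]
  rw [this, Nat.descFactorial_self]


/-- **Counting general polarizations for a type `Iₙ` Kodaira curve.**
For `n ≥ 2`, the number of tuples `(k₁, …, k_{n−1})` of integers with each
`kᵢ ∈ {1, …, n−1}` such that no consecutive sum `k_r + ⋯ + k_s`
(`1 ≤ r ≤ s ≤ n−1`) is divisible by `n`, is exactly `(n−1)!`. -/
theorem count_general_polarizations_cycle (n : ℕ) (hn : 2 ≤ n) :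
    Nat.card {k : Fin (n - 1) → ℤ //
      (∀ i, 1 ≤ k i ∧ k i ≤ (n : ℤ) - 1) ∧
      (∀ r s : Fin (n - 1), r ≤ s →
        ¬ ((n : ℤ) ∣ ∑ i ∈ Finset.Icc r s, k i))} = Nat.factorial (n - 1) := by
  obtain ⟨m, rfl⟩ : ∃ m, n = m + 1 := ⟨n - 1, by omega⟩
  exact card_adm m
end

section
/- Let n ≥ 2 be an integer and let (q_1, …, q_{n−1}) ∈ [0,1)^{n−1} be a tuple of real numbers such that ∑_{i=r}^{s} q_i ∉ ℤ for every 1 ≤ r ≤ s ≤ n−1. Then there exists a unique tuple (k_1, …, k_{n−1}) of integers with each k_i ∈ {1, …, n−1}, such that n does not divide ∑_{i=r}^{s} k_i for all 1 ≤ r ≤ s ≤ n−1, and such that ⌈∑_{i=r}^{s} q_i⌉ = ⌈∑_{i=r}^{s} k_i/n⌉ for all 1 ≤ r ≤ s ≤ n−1. -/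
/-- partial sums of a function on `Fin m`, extended by zero. -/
def chP {M : Type*} [AddCommGroup M] {m : ℕ} (f : Fin m → M) (j : ℕ) : M :=
  ∑ i ∈ Finset.range j, if h : i < m then f ⟨i, h⟩ else 0

lemma chP_Icc {M : Type*} [AddCommGroup M] {m : ℕ} (f : Fin m → M) (r s : Fin m) (hrs : r ≤ s) :
    ∑ i ∈ Finset.Icc r s, f i = chP f (s + 1) - chP f r := by
  have h1 : (r : ℕ) ≤ s + 1 := by have : (r : ℕ) ≤ s := hrs; omega
  unfold chP
  rw [← Finset.sum_Ico_eq_sub _ h1]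
  have h2 : Finset.Ico (r : ℕ) (s + 1) = (Finset.Icc r s).map Fin.valEmbedding := by
    rw [Fin.map_valEmbedding_Icc]; ext x; simp
  rw [h2, Finset.sum_map]
  simp

lemma ch_ceil (x y : ℝ) :
    ⌈y - x⌉ = ⌊y⌋ - ⌊x⌋ + if Int.fract x < Int.fract y then 1 else 0 := by
  have hx := Int.floor_add_fract x
  have hy := Int.floor_add_fract y
  have := Int.fract_nonneg x
  have := Int.fract_nonneg y
  have := Int.fract_lt_one x
  have := Int.fract_lt_one y
  rw [Int.ceil_eq_iff]
  split_ifs <;> push_cast <;> constructor <;> linarith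

lemma ch_ceil_int (n : ℕ) (hn : 0 < n) (A B : ℤ) :
    ⌈((B : ℝ) - A) / n⌉ = B / n - A / n + if A % n < B % n then 1 else 0 := by
  have hn' : (0 : ℝ) < n := by exact_mod_cast hn
  have hnz : (0 : ℤ) < n := by exact_mod_cast hn
  have hx : (A : ℝ) = n * (A / n : ℤ) + (A % n : ℤ) := by
    exact_mod_cast (Int.mul_ediv_add_emod A n).symm
  have hy : (B : ℝ) = n * (B / n : ℤ) + (B % n : ℤ) := by
    exact_mod_cast (Int.mul_ediv_add_emod B n).symm
  have a1 : (0 : ℝ) ≤ (A % n : ℤ) := by exact_mod_cast Int.emod_nonneg A hnz.ne'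
  have a2 : (0 : ℝ) ≤ (B % n : ℤ) := by exact_mod_cast Int.emod_nonneg B hnz.ne'
  have a3 : ((A % n : ℤ) : ℝ) < n := by exact_mod_cast Int.emod_lt_of_pos A hnz
  have a4 : ((B % n : ℤ) : ℝ) < n := by exact_mod_cast Int.emod_lt_of_pos B hnz
  rw [Int.ceil_eq_iff, lt_div_iff₀ hn', div_le_iff₀ hn', hx, hy]
  split_ifs with h
  · have h' : ((A % n : ℤ) : ℝ) < (B % n : ℤ) := by exact_mod_cast h
    push_cast at *
    constructor <;> nlinarith
  · have h' : ((B % n : ℤ) : ℝ) ≤ (A % n : ℤ) := by exact_mod_cast not_lt.mp h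
    push_cast at *
    constructor <;> nlinarith

/-- rank of the fractional part of `S j`. -/
noncomputable def chC (n : ℕ) (S : ℕ → ℝ) (j : ℕ) : ℕ :=
  ((Finset.range n).filter (fun i => Int.fract (S i) < Int.fract (S j))).card

lemma chC_lt_iff (n : ℕ) (S : ℕ → ℝ) (a b : ℕ) (ha : a < n) :
    chC n S a < chC n S b ↔ Int.fract (S a) < Int.fract (S b) := by
  constructor
  · intro h
    by_contra h'
    push Not at h'
    refine absurd h (not_lt.mpr (Finset.card_le_card ?_))
    intro i
    simp only [Finset.mem_filter]
    exact fun hi => ⟨hi.1, hi.2.trans_le h'⟩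
  · intro h
    apply Finset.card_lt_card
    rw [Finset.ssubset_iff_of_subset]
    · exact ⟨a, by simp [ha, h], by simp⟩
    · intro i
      simp only [Finset.mem_filter]
      exact fun hi => ⟨hi.1, hi.2.trans h⟩

lemma chC_lt (n : ℕ) (S : ℕ → ℝ) (b : ℕ) (hb : b < n) : chC n S b < n := by
  conv_rhs => rw [← Finset.card_range n]
  apply Finset.card_lt_card
  rw [Finset.ssubset_iff_of_subset (Finset.filter_subset _ _)]
  exact ⟨b, by simp [hb], by simp⟩

lemma ch_fract_ne (n : ℕ) (S : ℕ → ℝ)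
    (hS : ∀ a b, a < b → b < n → ¬ ∃ m : ℤ, S b - S a = m) (a b : ℕ) (ha : a < n) (hb : b < n)
    (hab : a ≠ b) : Int.fract (S a) ≠ Int.fract (S b) := by
  intro h
  obtain ⟨z, hz⟩ := Int.fract_eq_fract.mp h
  rcases lt_or_gt_of_ne hab with h1 | h1
  · exact hS a b h1 hb ⟨-z, by push_cast; linarith⟩
  · exact hS b a h1 ha ⟨z, hz⟩

noncomputable def chK (n : ℕ) (S : ℕ → ℝ) (j : ℕ) : ℤ := n * ⌊S j⌋ + chC n S j

lemma chK_div (n : ℕ) (S : ℕ → ℝ) (b : ℕ) (hb : b < n) :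
    chK n S b / n = ⌊S b⌋ ∧ chK n S b % n = chC n S b := by
  have h := chC_lt n S b hb
  rw [Int.ediv_emod_unique (by omega)]
  unfold chK
  refine ⟨by ring, by positivity, by exact_mod_cast h⟩

lemma chK_dvd (n : ℕ) (S : ℕ → ℝ)
    (hS : ∀ a b, a < b → b < n → ¬ ∃ m : ℤ, S b - S a = m) (a b : ℕ) (hab : a < b) (hb : b < n) :
    ¬ (n : ℤ) ∣ chK n S b - chK n S a := by
  intro h
  have h2 := Int.emod_eq_emod_iff_emod_sub_eq_zero.mpr (Int.emod_eq_zero_of_dvd h)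
  rw [(chK_div n S b hb).2, (chK_div n S a (hab.trans hb)).2] at h2
  have h3 := chC_lt_iff n S a b (hab.trans hb)
  have h4 := chC_lt_iff n S b a hb
  have h5 := ch_fract_ne n S hS a b (hab.trans hb) hb hab.ne
  rcases lt_or_gt_of_ne h5 with h6 | h6
  · have := h3.mpr h6; omega
  · have := h4.mpr h6; omega

lemma chK_ceil (n : ℕ) (S : ℕ → ℝ) (a b : ℕ) (hab : a < b) (hb : b < n) :
    ⌈S b - S a⌉ = ⌈((chK n S b : ℝ) - chK n S a) / n⌉ := by
  have ha := hab.trans hb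
  rw [ch_ceil, ch_ceil_int n (by omega), (chK_div n S b hb).1, (chK_div n S a ha).1,
    (chK_div n S b hb).2, (chK_div n S a ha).2]
  simp only [Nat.cast_lt, chC_lt_iff n S a b ha]

lemma ch_rank (n : ℕ) (d : ℕ → ℕ) (hd : ∀ j < n, d j < n)
    (hinj : ∀ a < n, ∀ b < n, d a = d b → a = b) (j : ℕ) (hj : j < n) :
    ((Finset.range n).filter (fun i => d i < d j)).card = d j := by
  have hinj' : Set.InjOn d (Finset.range n) := by
    intro a ha b hb h
    exact hinj a (by simpa using ha) b (by simpa using hb) h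
  have himg : (Finset.range n).image d = Finset.range n := by
    apply Finset.eq_of_subset_of_card_le
    · intro x hx
      obtain ⟨i, hi, rfl⟩ := Finset.mem_image.mp hx
      simpa using hd i (by simpa using hi)
    · rw [Finset.card_image_of_injOn hinj']
  rw [← Finset.card_image_of_injOn (f := d) (hinj'.mono (by intro x hx; simp at hx ⊢; exact hx.1)),
    ← Finset.filter_image (p := fun x => x < d j), himg]
  have : (Finset.range n).filter (fun x => x < d j) = Finset.range (d j) := by
    ext x
    have := hd j hj
    simp
    omega
  rw [this, Finset.card_range]

lemma chK_unique (n : ℕ) (S : ℕ → ℝ) (K : ℕ → ℤ) (hS0 : S 0 = 0) (hK0 : K 0 = 0)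
    (hS : ∀ a b, a < b → b < n → ¬ ∃ m : ℤ, S b - S a = m)
    (hK : ∀ a b, a < b → b < n → ¬ (n : ℤ) ∣ K b - K a)
    (hc : ∀ a b, a < b → b < n → ⌈S b - S a⌉ = ⌈((K b : ℝ) - K a) / n⌉)
    (j : ℕ) (hj : j < n) : K j = chK n S j := by
  have hn : 0 < n := by omega
  have hnz : (0 : ℤ) < n := by exact_mod_cast hn
  have hne : ∀ a b, a < b → b < n → K a % n ≠ K b % n := by
    intro a b hab hb h
    exact hK a b hab hb (Int.dvd_of_emod_eq_zero (Int.emod_eq_emod_iff_emod_sub_eq_zero.mp h.symm))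
  have hfl : ∀ b < n, ⌊S b⌋ = K b / n := by
    intro b hb
    rcases Nat.eq_zero_or_pos b with rfl | hb0
    · simp [hS0, hK0]
    · have h := hc 0 b hb0 hb
      rw [ch_ceil, ch_ceil_int n hn] at h
      have h1 := hne 0 b hb0 hb
      have h2 := ch_fract_ne n S hS 0 b hn hb hb0.ne
      have h3 := Int.emod_nonneg (K b) hnz.ne'
      have h4 := Int.fract_nonneg (S b)
      simp only [hS0, hK0, Int.fract_zero, Int.zero_emod, Int.floor_zero, Int.zero_ediv] at h h1 h2
      rw [if_pos (lt_of_le_of_ne h4 h2), if_pos (lt_of_le_of_ne h3 h1)] at h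
      omega
  have hlt : ∀ a b, a < b → b < n → (Int.fract (S a) < Int.fract (S b) ↔ K a % n < K b % n) := by
    intro a b hab hb
    have h := hc a b hab hb
    rw [ch_ceil, ch_ceil_int n hn, hfl b hb, hfl a (hab.trans hb)] at h
    split_ifs at h with h1 h2 h2 <;> first | omega | tauto
  have hlt' : ∀ a < n, ∀ b < n, (Int.fract (S a) < Int.fract (S b) ↔ K a % n < K b % n) := by
    intro a ha b hb
    rcases lt_trichotomy a b with h | rfl | h
    · exact hlt a b h hb
    · simp
    · have h1 := hlt b a h ha
      have h2 := hne b a h ha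
      have h3 := ch_fract_ne n S hS b a hb ha h.ne
      rw [← not_iff_not, not_lt, not_lt, le_iff_lt_or_eq, le_iff_lt_or_eq, h1]
      simp [h2, h3]
  have hcast : ∀ a, (((K a % n).toNat : ℕ) : ℤ) = K a % n := fun a =>
    Int.toNat_of_nonneg (Int.emod_nonneg _ hnz.ne')
  have hr := ch_rank n (fun a => (K a % n).toNat) (fun a _ => by
      have := Int.emod_lt_of_pos (K a) hnz
      have := hcast a
      show (K a % n).toNat < n
      omega) (fun a ha b hb h => by
      have h' : K a % n = K b % n := by
        rw [← hcast a, ← hcast b]; exact_mod_cast h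
      rcases lt_trichotomy a b with h1 | h1 | h1
      · exact absurd h' (hne a b h1 hb)
      · exact h1
      · exact absurd h'.symm (hne b a h1 ha)) j hj
  have hC : chC n S j = (K j % n).toNat := by
    rw [← hr]
    unfold chC
    congr 1
    apply Finset.filter_congr
    intro i hi
    rw [hlt' i (by simpa using hi) j hj, ← hcast i, ← hcast j, Nat.cast_lt]
    simp
  unfold chK
  rw [hC, hcast, hfl j hj, Int.mul_ediv_add_emod]


/-- Each chamber of the arrangement `{∑_{i=r}^{s} q_i = m}` in the cube `[0,1)^{n-1}`
contains exactly one point with coordinates in `(1/n)·{1,…,n−1}` satisfying the same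
generality condition: given `(q_1,…,q_{n−1}) ∈ [0,1)^{n−1}` with `∑_{i=r}^{s} q_i ∉ ℤ`
for all `1 ≤ r ≤ s ≤ n−1`, there is a unique integer tuple `(k_1,…,k_{n−1})` with
`k_i ∈ {1,…,n−1}`, with `n ∤ ∑_{i=r}^{s} k_i` for all `r ≤ s`, and with
`⌈∑_{i=r}^{s} q_i⌉ = ⌈∑_{i=r}^{s} k_i/n⌉` for all `r ≤ s`. -/
theorem unique_rational_representative_in_chamber (n : ℕ) (hn : 2 ≤ n)
    (q : Fin (n - 1) → ℝ) (hq0 : ∀ i, 0 ≤ q i) (hq1 : ∀ i, q i < 1)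
    (hgen : ∀ r s : Fin (n - 1), r ≤ s →
      ¬ ∃ m : ℤ, ∑ i ∈ Finset.Icc r s, q i = (m : ℝ)) :
    ∃! k : Fin (n - 1) → ℤ,
      (∀ i, 1 ≤ k i ∧ k i ≤ (n : ℤ) - 1) ∧
      (∀ r s : Fin (n - 1), r ≤ s → ¬ ((n : ℤ) ∣ ∑ i ∈ Finset.Icc r s, k i)) ∧
      (∀ r s : Fin (n - 1), r ≤ s →
        ⌈∑ i ∈ Finset.Icc r s, q i⌉ = ⌈(∑ i ∈ Finset.Icc r s, (k i : ℝ)) / (n : ℝ)⌉) := by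
  have hn1 : n - 1 + 1 = n := by omega
  -- transfer from indices a < b < n to r ≤ s
  have tr : ∀ a b : ℕ, a < b → b < n → ∃ r s : Fin (n - 1), r ≤ s ∧ (r : ℕ) = a ∧ (s : ℕ) + 1 = b := by
    intro a b hab hb
    refine ⟨⟨a, by omega⟩, ⟨b - 1, by omega⟩, ?_, rfl, ?_⟩
    · show a ≤ b - 1
      omega
    · show b - 1 + 1 = b
      omega
  have hS0 : chP q 0 = 0 := by simp [chP]
  have hS : ∀ a b, a < b → b < n → ¬ ∃ m : ℤ, chP q b - chP q a = m := by
    intro a b hab hb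
    obtain ⟨r, s, hrs, rfl, rfl⟩ := tr a b hab hb
    rw [← chP_Icc q r s hrs]
    exact hgen r s hrs
  have hsum : ∀ k : Fin (n - 1) → ℤ, ∀ r s : Fin (n - 1), r ≤ s →
      (∑ i ∈ Finset.Icc r s, (k i : ℝ)) = ((chP k (s + 1) : ℤ) : ℝ) - ((chP k r : ℤ) : ℝ) := by
    intro k r s hrs
    have := chP_Icc k r s hrs
    exact_mod_cast congrArg (Int.cast : ℤ → ℝ) this
  have hstep : ∀ k : Fin (n - 1) → ℤ, ∀ i : Fin (n - 1), k i = chP k (i + 1) - chP k i := by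
    intro k i
    rw [← chP_Icc k i i le_rfl]
    simp
  let S := chP q
  let k : Fin (n - 1) → ℤ := fun i => chK n S (i + 1) - chK n S i
  have hkP : ∀ j < n, chP k j = chK n S j - chK n S 0 := by
    intro j hj
    rw [← Finset.sum_range_sub]
    apply Finset.sum_congr rfl
    intro i hi
    have : i < n - 1 := by have := Finset.mem_range.mp hi; omega
    simp [this, k]
  have hkI : ∀ r s : Fin (n - 1), r ≤ s →
      chP k (s + 1) - chP k r = chK n S (s + 1) - chK n S r := by
    intro r s hrs
    rw [hkP _ (by omega), hkP _ (by omega)]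
    ring
  have h2 : ∀ r s : Fin (n - 1), r ≤ s → ¬ ((n : ℤ) ∣ ∑ i ∈ Finset.Icc r s, k i) := by
    intro r s hrs
    rw [chP_Icc k r s hrs, hkI r s hrs]
    have : (r : ℕ) ≤ s := hrs
    exact chK_dvd n S hS _ _ (by omega) (by omega)
  have h3 : ∀ r s : Fin (n - 1), r ≤ s →
        ⌈∑ i ∈ Finset.Icc r s, q i⌉ = ⌈(∑ i ∈ Finset.Icc r s, (k i : ℝ)) / (n : ℝ)⌉ := by
    intro r s hrs
    have hrs' : (r : ℕ) ≤ s := hrs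
    rw [hsum k r s hrs, chP_Icc q r s hrs, chK_ceil n (chP q) _ _ (by omega) (by omega)]
    have := congrArg (Int.cast : ℤ → ℝ) (hkI r s hrs)
    push_cast at this
    rw [this]
  refine ⟨k, ⟨?_, h2, h3⟩, ?_⟩
  · intro i
    have e2 := h2 i i le_rfl
    have e3 := h3 i i le_rfl
    have hg := hgen i i le_rfl
    simp only [Finset.Icc_self, Finset.sum_singleton] at e2 e3 hg
    have hpos : 0 < q i := lt_of_le_of_ne (hq0 i) (fun h => hg ⟨0, by simp [← h]⟩)
    have h1 : ⌈q i⌉ = 1 := by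
      rw [Int.ceil_eq_iff]
      push_cast
      exact ⟨by linarith, (hq1 i).le⟩
    have hn' : (0 : ℝ) < n := by exact_mod_cast (by omega : 0 < n)
    rw [h1, eq_comm, Int.ceil_eq_iff, lt_div_iff₀ hn', div_le_iff₀ hn'] at e3
    push_cast at e3
    have l1 : (0 : ℝ) < k i := by linarith [e3.1]
    have l2 : (k i : ℝ) ≤ n := by linarith [e3.2]
    have l1' : 0 < k i := by exact_mod_cast l1
    have l2' : k i ≤ n := by exact_mod_cast l2
    have l3 : k i ≠ n := fun h => e2 (by rw [h])
    omega
  · rintro k' ⟨-, g2, g3⟩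
    have hu : ∀ j < n, chP k' j = chK n S j := by
      intro j hj
      refine chK_unique n S (chP k') hS0 (by simp [chP]) hS ?_ ?_ j hj
      · intro a b hab hb
        obtain ⟨r, s, hrs, rfl, rfl⟩ := tr a b hab hb
        rw [← chP_Icc k' r s hrs]
        exact g2 r s hrs
      · intro a b hab hb
        obtain ⟨r, s, hrs, rfl, rfl⟩ := tr a b hab hb
        rw [← hsum k' r s hrs, ← chP_Icc q r s hrs]
        exact g3 r s hrs
    funext i
    rw [hstep k' i, hu _ (by omega), hu _ (by omega)]
end
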